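/- Let N be a finite set of players with a distinguished platform player w_p ∈ N, and let a session be given by an owner map P : {0,1,…,n} → N (n ≥ 1) with P(0) = w_p and P(k) ≠ w_p for 1 ≤ k ≤ n, and revenues r : {1,…,n} → ℝ with r(k) ≥ 0 for all k. Let v be the single-session game under Assumptions 1 and 2, and define the allocation x_i := Σ_{k=1}^{n} ([i ∈ P(E^k)] / n^p_k) · r(k) for each i ∈ N ([i ∈ P(E^k)] is 1 if i ∈ P(E^k) and 0 otherwise). Then x lies in the core of v: Σ_{i ∈ N} x_i = v(N) and Σ_{i ∈ F} x_i ≥ v(F) for every coalition F ⊆ N. -/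

import Mathlib

open Finset

/-!
The core is stable under nonnegative scaling and under addition: allocations in the cores of
several games add up to an allocation in the core of the sum. The session game is a nonnegative
combination of unanimity games, event `k` contributing `r k` times the unanimity game of the
coalition of owners up to `k`, and sharing the worth of a unanimity game equally among its carrier
is a core allocation. The allocation of the theorem is the sum of these equal shares.
-/

namespace CooperativeGame

variable {N ι α M 𝕜 : Type*}

section Core

variable [Fintype N]

/-- The core of the transferable-utility game with characteristic function `w`: the efficient
allocations that no coalition can improve upon. A game is encoded by its characteristic function,
on which no normalization `w ∅ = 0` is imposed. -/
def core [AddCommMonoid M] [LE M] (w : Finset N → M) : Set (N → M) :=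
  {x | ∑ i, x i = w univ ∧ ∀ F : Finset N, w F ≤ ∑ i ∈ F, x i}

theorem smul_mem_core [Zero α] [Preorder α] [AddCommMonoid M] [Preorder M] [DistribSMul α M]
    [PosSMulMono α M] {c : α} (hc : 0 ≤ c) {w : Finset N → M} {x : N → M} (hx : x ∈ core w) :
    c • x ∈ core (c • w) := by
  obtain ⟨efficient, stable⟩ := hx
  refine ⟨?_, fun F => ?_⟩
  · simp only [Pi.smul_apply, ← smul_sum, efficient]
  · simpa only [Pi.smul_apply, ← smul_sum] using smul_le_smul_of_nonneg_left (stable F) hc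

theorem sum_mem_core [AddCommMonoid M] [Preorder M] [AddLeftMono M] {s : Finset ι}
    {w : ι → Finset N → M} {x : ι → N → M} (hx : ∀ k ∈ s, x k ∈ core (w k)) :
    ∑ k ∈ s, x k ∈ core (∑ k ∈ s, w k) := by
  refine ⟨?_, fun F => ?_⟩
  · simp only [Finset.sum_apply]
    rw [sum_comm]
    exact sum_congr rfl fun k hk => (hx k hk).1
  · simp only [Finset.sum_apply]
    rw [sum_comm]
    exact sum_le_sum fun k hk => (hx k hk).2 F

end Core

section Unanimity

variable [DecidableEq N]

/-- The unanimity game with carrier `S`, in which exactly the coalitions containing all of `S` earn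
one unit. -/
def unanimityGame (𝕜 : Type*) [Zero 𝕜] [One 𝕜] (S F : Finset N) : 𝕜 :=
  if S ⊆ F then 1 else 0

/-- The allocation dividing one unit equally among the members of `S`, which is the Shapley value of
the unanimity game with carrier `S`. It vanishes identically when `S` is empty. -/
def equalShare (𝕜 : Type*) [DivisionSemiring 𝕜] (S : Finset N) (i : N) : 𝕜 :=
  (if i ∈ S then 1 else 0) / #S

theorem equalShare_nonneg [Semifield 𝕜] [LinearOrder 𝕜] [IsStrictOrderedRing 𝕜]
    (S : Finset N) (i : N) : 0 ≤ equalShare 𝕜 S i :=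
  div_nonneg (ite_nonneg zero_le_one le_rfl) (Nat.cast_nonneg _)

theorem sum_equalShare [DivisionSemiring 𝕜] [CharZero 𝕜] {S F : Finset N} (hS : S.Nonempty)
    (hSF : S ⊆ F) : ∑ i ∈ F, equalShare 𝕜 S i = 1 := by
  have card_ne_zero : (#S : 𝕜) ≠ 0 := Nat.cast_ne_zero.mpr hS.card_ne_zero
  calc ∑ i ∈ F, equalShare 𝕜 S i = #(F ∩ S) / #S := by
        simp only [equalShare, ← sum_div, sum_ite_mem, sum_const, nsmul_one]
    _ = 1 := by rw [inter_eq_right.mpr hSF, div_self card_ne_zero]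

theorem equalShare_mem_core [Fintype N] [Semifield 𝕜] [LinearOrder 𝕜] [IsStrictOrderedRing 𝕜]
    {S : Finset N} (hS : S.Nonempty) : equalShare 𝕜 S ∈ core (unanimityGame 𝕜 S) := by
  refine ⟨?_, fun F => ?_⟩
  · rw [unanimityGame, if_pos (subset_univ S), sum_equalShare hS (subset_univ S)]
  · rw [unanimityGame]
    split_ifs with hSF
    · exact (sum_equalShare hS hSF).ge
    · exact sum_nonneg fun i _ => equalShare_nonneg S i

end Unanimity

end CooperativeGame

open CooperativeGame in
theorem shapley_allocation_in_core_A12_general {N ι 𝕜 : Type*} [Fintype N] [DecidableEq N]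
    [Semifield 𝕜] [LinearOrder 𝕜] [IsStrictOrderedRing 𝕜] {s : Finset ι} {S : ι → Finset N}
    {r : ι → 𝕜} (hS : ∀ k ∈ s, (S k).Nonempty) (hr : ∀ k ∈ s, 0 ≤ r k) :
    (fun i => ∑ k ∈ s, (if i ∈ S k then (1 : 𝕜) else 0) / #(S k) * r k) ∈
      core fun F => ∑ k ∈ s, if S k ⊆ F then r k else 0 := by
  have mem_core :
      ∑ k ∈ s, r k • equalShare 𝕜 (S k) ∈ core (∑ k ∈ s, r k • unanimityGame 𝕜 (S k)) :=
    sum_mem_core fun k hk => smul_mem_core (hr k hk) (equalShare_mem_core (hS k hk))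
  convert mem_core using 1
  · congr 1 with F
    simp only [Finset.sum_apply, Pi.smul_apply, smul_eq_mul, unanimityGame, mul_ite, mul_one,
      mul_zero]
  · ext i
    simp only [Finset.sum_apply, Pi.smul_apply, smul_eq_mul, equalShare, mul_comm]

/-- For the single-session game `v` under Assumptions 1 and 2 with
nonnegative revenues, the allocation `x_i = Σ_{k=1}^{n} ([i ∈ P(E^k)] / n^p_k) · r(k)`
lies in the core of `v`. -/
theorem shapley_allocation_in_core_A12
    {N : Type*} [Fintype N] [DecidableEq N]
    (wp : N) (n : ℕ) (hn : 1 ≤ n) (P : ℕ → N) (r : ℕ → ℝ)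
    (hP0 : P 0 = wp)
    (hPk : ∀ k, 1 ≤ k → k ≤ n → P k ≠ wp)
    (hr : ∀ k, 1 ≤ k → k ≤ n → 0 ≤ r k)
    (v : Finset N → ℝ)
    (hv : ∀ F : Finset N, v F = ∑ k ∈ Finset.Icc 1 n,
      if (Finset.range (k + 1)).image P ⊆ F then r k else 0)
    (x : N → ℝ)
    (hx : ∀ i : N, x i = ∑ k ∈ Finset.Icc 1 n,
      (if i ∈ (Finset.range (k + 1)).image P then (1 : ℝ) else 0) /
        (((Finset.range (k + 1)).image P).card : ℝ) * r k) :
    (∑ i : N, x i = v Finset.univ) ∧ ∀ F : Finset N, v F ≤ ∑ i ∈ F, x i := by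
  obtain ⟨rfl, rfl⟩ := And.intro (funext hv) (funext hx)
  exact shapley_allocation_in_core_A12_general (fun _ _ => nonempty_range_add_one.image P)
    fun k hk => hr k (mem_Icc.mp hk).1 (mem_Icc.mp hk).2
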